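/- arXiv:gr-qc/0505118 — 3 statements merged into one kernel-verified Lean document; each statement's English description precedes it below -/
import Mathlib

section
/- Let C > 0, T > 0, and let P : [0,T] → ℝ be continuous with P(t) > 0 for all t, satisfying P(t) ≤ C + C·∫₀ᵗ ( P(s)·ln(1 + P(s)²) + ln(1 + P(s)²)/P(s) ) ds for all t ∈ [0,T]. Then P(t) ≤ sqrt( (1 + C²)^{exp(2Ct)} − 1 ) for all t ∈ [0,T]; in particular P is bounded on [0,T]. -/
/-!
Let `g p = p ln(1+p²) + ln(1+p²)/p` be the integrand nonlinearity and `z t = C + C ∫₀ᵗ g(P)` the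
right-hand side of the integral inequality. Since `g` is increasing on `(0,∞)`
(`momentumRate_monotoneOn`) and `P ≤ z`, we get `z' = C g(P) ≤ C g(z)`. As
`z g(z) = (1+z²) ln(1+z²)`, the function `L = ln(1+z²)` satisfies `L' ≤ 2 C L`, so `L e^{-2Ct}` is
nonincreasing and `L t ≤ ln(1+C²) e^{2Ct}`. Exponentiating gives `1 + P² ≤ 1 + z² ≤ (1+C²)^{e^{2Ct}}`.
-/

/-- The nonlinearity in the integral inequality, as a function of the momentum. -/
noncomputable def momentumRate (p : ℝ) : ℝ :=
  p * Real.log (1 + p ^ 2) + Real.log (1 + p ^ 2) / p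

/-- The derivative of `momentumRate` is `ln(1+p²) + 2 - ln(1+p²)/p²`, which is at least `1`
because `0 ≤ ln(1+p²) ≤ p²`. -/
lemma momentumRate_monotoneOn : MonotoneOn momentumRate (Set.Ioi 0) := by
  have hd : ∀ p ∈ Set.Ioi (0:ℝ), HasDerivAt momentumRate
      (Real.log (1 + p ^ 2) + 2 - Real.log (1 + p ^ 2) / p ^ 2) p := by
    intro p hp
    have hp0 : p ≠ 0 := ne_of_gt hp
    have h1 : (1 + p ^ 2) ≠ 0 := by positivity
    have hl : HasDerivAt (fun p : ℝ => Real.log (1 + p ^ 2)) (2 * p / (1 + p ^ 2)) p := by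
      have := (((hasDerivAt_id p).pow 2).const_add 1).log h1
      simpa using this
    have := ((hasDerivAt_id p).mul hl).add (hl.div (hasDerivAt_id p) hp0)
    refine this.congr_deriv ?_
    simp only [id]
    field_simp
    ring
  refine monotoneOn_of_deriv_nonneg (convex_Ioi 0)
    (fun p hp => (hd p hp).continuousAt.continuousWithinAt) ?_ ?_
  · rw [interior_Ioi]
    exact fun p hp => (hd p hp).differentiableAt.differentiableWithinAt
  · rw [interior_Ioi]
    intro p hp
    rw [(hd p hp).deriv]
    have hp' : (0:ℝ) < p ^ 2 := pow_pos hp 2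
    have h0 : 0 ≤ Real.log (1 + p ^ 2) := Real.log_nonneg (by linarith)
    have h1 : Real.log (1 + p ^ 2) ≤ p ^ 2 := by
      have := Real.log_le_sub_one_of_pos (x := 1 + p ^ 2) (by linarith)
      linarith
    have h2 : Real.log (1 + p ^ 2) / p ^ 2 ≤ 1 := (div_le_one hp').2 h1
    linarith


/-- The a priori bound (estimate (5.18)) on the supremum of the radial momenta:
a positive continuous function satisfying the integral inequality
`P(t) ≤ C + C ∫₀ᵗ (P ln(1+P²) + ln(1+P²)/P)` is bounded by
`sqrt((1+C²)^{exp(2Ct)} − 1)`; in particular it is bounded on `[0,T]`. -/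
theorem stmt_2 (C T : ℝ) (hC : 0 < C) (hT : 0 < T) (P : ℝ → ℝ)
    (hP_cont : ContinuousOn P (Set.Icc 0 T))
    (hP_pos : ∀ t ∈ Set.Icc 0 T, 0 < P t)
    (hP_ineq : ∀ t ∈ Set.Icc 0 T, P t ≤ C + C * ∫ s in (0:ℝ)..t,
      (P s * Real.log (1 + (P s) ^ 2) + Real.log (1 + (P s) ^ 2) / P s)) :
    (∀ t ∈ Set.Icc 0 T,
      P t ≤ Real.sqrt ((1 + C ^ 2) ^ (Real.exp (2 * C * t)) - 1)) ∧
    ∃ B : ℝ, ∀ t ∈ Set.Icc 0 T, P t ≤ B := by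
  have hCt : ∀ t ∈ Set.Icc 0 T,
      P t ≤ Real.sqrt ((1 + C ^ 2) ^ (Real.exp (2 * C * t)) - 1) := by
    have hφ : ContinuousOn (fun s => momentumRate (P s)) (Set.Icc 0 T) := by
      have hl : ContinuousOn (fun s => Real.log (1 + (P s) ^ 2)) (Set.Icc 0 T) :=
        ContinuousOn.log (by fun_prop) (fun s _ => by positivity)
      exact (hP_cont.mul hl).add (hl.div hP_cont fun s hs => (hP_pos s hs).ne')
    set z : ℝ → ℝ := fun t => C + C * ∫ s in (0:ℝ)..t, momentumRate (P s) with hz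
    have hPz : ∀ t ∈ Set.Icc 0 T, P t ≤ z t := hP_ineq
    have hzpos : ∀ t ∈ Set.Icc 0 T, 0 < z t := fun t ht => (hP_pos t ht).trans_le (hPz t ht)
    have hzc : ContinuousOn z (Set.Icc 0 T) := by
      have := intervalIntegral.continuousOn_primitive_interval (μ := MeasureTheory.volume)
        (f := fun s => momentumRate (P s)) (a := 0) (b := T)
        (by rw [Set.uIcc_of_le hT.le]; exact hφ.integrableOn_Icc)
      rw [Set.uIcc_of_le hT.le] at this
      exact continuousOn_const.add (continuousOn_const.mul this)
    have hzd : ∀ t ∈ Set.Ioo 0 T, HasDerivAt z (C * momentumRate (P t)) t := by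
      intro t ht
      have hi : IntervalIntegrable (fun s => momentumRate (P s)) MeasureTheory.volume 0 t := by
        apply ContinuousOn.intervalIntegrable
        rw [Set.uIcc_of_le ht.1.le]
        exact hφ.mono (Set.Icc_subset_Icc_right ht.2.le)
      have := intervalIntegral.integral_hasDerivAt_right hi
        ((hφ.mono Set.Ioo_subset_Icc_self).stronglyMeasurableAtFilter isOpen_Ioo t ht)
        (hφ.continuousAt (Icc_mem_nhds ht.1 ht.2))
      exact (this.const_mul C).const_add C
    set M : ℝ → ℝ := fun t => Real.log (1 + z t ^ 2) * Real.exp (-(2 * C * t)) with hM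
    have hMd : ∀ t ∈ Set.Ioo 0 T, HasDerivAt M
        ((2 * z t * (C * momentumRate (P t)) / (1 + z t ^ 2) - 2 * C * Real.log (1 + z t ^ 2))
          * Real.exp (-(2 * C * t))) t := by
      intro t ht
      have h1 : (1 + z t ^ 2) ≠ 0 := by positivity
      have hl := (((hzd t ht).pow 2).const_add 1).log h1
      have he := ((hasDerivAt_id t).const_mul (2 * C)).neg.exp
      refine (hl.mul he).congr_deriv ?_
      simp
      ring
    have hMc : ContinuousOn M (Set.Icc 0 T) :=
      (ContinuousOn.log (by fun_prop) (fun s _ => by positivity)).mul (by fun_prop)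
    have hanti : AntitoneOn M (Set.Icc 0 T) := by
      refine antitoneOn_of_deriv_nonpos (convex_Icc 0 T) hMc ?_ ?_
      · rw [interior_Icc]
        exact fun t ht => (hMd t ht).differentiableAt.differentiableWithinAt
      · rw [interior_Icc]
        intro t ht
        have ht' := Set.Ioo_subset_Icc_self ht
        rw [(hMd t ht).deriv]
        have hzt := hzpos t ht'
        have hg := momentumRate_monotoneOn (hP_pos t ht') hzt (hPz t ht')
        have hgz : z t * momentumRate (z t) = (1 + z t ^ 2) * Real.log (1 + z t ^ 2) := by
          unfold momentumRate
          field_simp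
          ring
        refine mul_nonpos_of_nonpos_of_nonneg ?_ (Real.exp_pos _).le
        rw [sub_nonpos, div_le_iff₀ (by positivity)]
        calc 2 * z t * (C * momentumRate (P t))
            = 2 * C * (z t * momentumRate (P t)) := by ring
          _ ≤ 2 * C * (z t * momentumRate (z t)) := by gcongr
          _ = 2 * C * Real.log (1 + z t ^ 2) * (1 + z t ^ 2) := by rw [hgz]; ring
    intro t ht
    have hz0 : z 0 = C := by simp [hz]
    have h0 : M t ≤ M 0 := hanti (Set.left_mem_Icc.2 hT.le) ht ht.1
    have hL : Real.log (1 + z t ^ 2) ≤ Real.log (1 + C ^ 2) * Real.exp (2 * C * t) := by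
      simp only [hM, hz0, Real.exp_neg, mul_zero, Real.exp_zero, inv_one, mul_one] at h0
      rwa [← div_eq_mul_inv, div_le_iff₀ (Real.exp_pos _)] at h0
    apply Real.le_sqrt_of_sq_le
    have hexp : 1 + z t ^ 2 ≤ (1 + C ^ 2) ^ Real.exp (2 * C * t) := by
      rw [Real.rpow_def_of_pos (by positivity)]
      exact (Real.log_le_iff_le_exp (by positivity)).1 hL
    have hsq : P t ^ 2 ≤ z t ^ 2 := pow_le_pow_left₀ (hP_pos t ht).le (hPz t ht) 2
    linarith
  refine ⟨hCt, ?_⟩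
  obtain ⟨B, hB⟩ := isCompact_Icc.bddAbove_image hP_cont
  exact ⟨B, fun t ht => hB (Set.mem_image_of_mem P ht)⟩
end

section
/- Let Λ, K, r₀ > 0, and let λ, ρ, p : (0,∞) → ℝ be measurable with 0 ≤ λ(s) ≤ Λ, |p(s)| ≤ ρ(s), and 0 ≤ ρ(s) ≤ K·min(1, r₀⁴/s⁴) for all s > 0. Define m(r) := 4π·∫₀ʳ s²·ρ(s) ds. Then ∫₀^∞ e^{2λ(s)}·( m(s)/s² + 4π·s·|p(s)| ) ds ≤ 10π·e^{2Λ}·K·r₀². -/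
/-!
The mass function satisfies `m(s) ≤ (4π/3) K s³` everywhere (from `ρ ≤ K`), and
`m(s) ≤ (16π/3) K r₀³` for `s ≥ r₀`, since the tail `ρ ≤ K r₀⁴/t⁴` contributes at most
`4π K r₀⁴ ∫_{r₀}^∞ t⁻² dt = 4π K r₀³`. Hence the integrand is dominated by `π K e^{2Λ}` times
`(16/3) s` on `(0, r₀]` and `(16/3) r₀³ s⁻² + 4 r₀⁴ s⁻³` on `(r₀, ∞)`, and this majorant
integrates to exactly `(8/3 + 16/3 + 2) r₀² = 10 r₀²`.
-/

open MeasureTheory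

section MassBounds

variable {K r₀ : ℝ} {ρ : ℝ → ℝ}

lemma sq_mul_density_intervalIntegrable (hK : 0 < K) (hρ_meas : Measurable ρ)
    (hρ_bd : ∀ s : ℝ, 0 < s → 0 ≤ ρ s ∧ ρ s ≤ K * min 1 (r₀ ^ 4 / s ^ 4))
    {a b : ℝ} (ha : 0 ≤ a) (hab : a ≤ b) :
    IntervalIntegrable (fun s => s ^ 2 * ρ s) volume a b := by
  rw [intervalIntegrable_iff_integrableOn_Ioc_of_le hab]
  have hc : IntegrableOn (fun s : ℝ => s ^ 2 * K) (Set.Ioc a b) :=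
    (intervalIntegrable_iff_integrableOn_Ioc_of_le hab).1
      (Continuous.intervalIntegrable (by fun_prop) _ _)
  refine Integrable.mono' hc (by fun_prop) ?_
  filter_upwards [ae_restrict_mem measurableSet_Ioc] with s hs
  obtain ⟨h0, h1⟩ := hρ_bd s (ha.trans_lt hs.1)
  rw [Real.norm_of_nonneg (by positivity)]
  have : ρ s ≤ K := h1.trans (mul_le_of_le_one_right hK.le (min_le_left _ _))
  gcongr

lemma integral_sq_mul_density_le_cube (hK : 0 < K) (hρ_meas : Measurable ρ)
    (hρ_bd : ∀ s : ℝ, 0 < s → 0 ≤ ρ s ∧ ρ s ≤ K * min 1 (r₀ ^ 4 / s ^ 4))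
    {b : ℝ} (hb : 0 ≤ b) :
    ∫ s in (0:ℝ)..b, s ^ 2 * ρ s ≤ K * b ^ 3 / 3 := by
  have h : ∫ s in (0:ℝ)..b, s ^ 2 * ρ s ≤ ∫ s in (0:ℝ)..b, s ^ 2 * K := by
    refine intervalIntegral.integral_mono_on_of_le_Ioo hb
      (sq_mul_density_intervalIntegrable hK hρ_meas hρ_bd le_rfl hb)
      (Continuous.intervalIntegrable (by fun_prop) _ _) ?_
    intro s hs
    have : ρ s ≤ K :=
      (hρ_bd s hs.1).2.trans (mul_le_of_le_one_right hK.le (min_le_left _ _))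
    gcongr
  refine h.trans (le_of_eq ?_)
  rw [intervalIntegral.integral_mul_const, integral_pow]
  norm_num
  ring

lemma integral_sq_mul_density_le_const (hK : 0 < K) (hr₀ : 0 < r₀) (hρ_meas : Measurable ρ)
    (hρ_bd : ∀ s : ℝ, 0 < s → 0 ≤ ρ s ∧ ρ s ≤ K * min 1 (r₀ ^ 4 / s ^ 4))
    {b : ℝ} (hb : r₀ ≤ b) :
    ∫ s in (0:ℝ)..b, s ^ 2 * ρ s ≤ 4 / 3 * K * r₀ ^ 3 := by
  have hb0 : 0 < b := hr₀.trans_le hb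
  have hz : (0:ℝ) ∉ Set.uIcc r₀ b := by
    rw [Set.uIcc_of_le hb]
    exact fun h => absurd h.1 (not_le.2 hr₀)
  rw [← intervalIntegral.integral_add_adjacent_intervals
    (sq_mul_density_intervalIntegrable hK hρ_meas hρ_bd le_rfl hr₀.le)
    (sq_mul_density_intervalIntegrable hK hρ_meas hρ_bd hr₀.le hb)]
  have h1 := integral_sq_mul_density_le_cube hK hρ_meas hρ_bd hr₀.le
  have h2 : ∫ s in r₀..b, s ^ 2 * ρ s ≤ ∫ s in r₀..b, K * r₀ ^ 4 * s ^ (-2 : ℤ) := by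
    refine intervalIntegral.integral_mono_on_of_le_Ioo hb
      (sq_mul_density_intervalIntegrable hK hρ_meas hρ_bd hr₀.le hb)
      ((intervalIntegral.intervalIntegrable_zpow (Or.inr hz)).const_mul _) ?_
    intro s hs
    have hs0 : 0 < s := hr₀.trans hs.1
    have : ρ s ≤ K * (r₀ ^ 4 / s ^ 4) :=
      (hρ_bd s hs0).2.trans (by gcongr; exact min_le_right _ _)
    calc s ^ 2 * ρ s ≤ s ^ 2 * (K * (r₀ ^ 4 / s ^ 4)) := by gcongr
      _ = K * r₀ ^ 4 * s ^ (-2 : ℤ) := by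
        rw [zpow_neg]
        field_simp
  have h3 : ∫ s in r₀..b, K * r₀ ^ 4 * s ^ (-2 : ℤ) = K * r₀ ^ 3 - K * r₀ ^ 4 / b := by
    rw [intervalIntegral.integral_const_mul, integral_zpow (Or.inr ⟨by norm_num, hz⟩)]
    norm_num
    field_simp
    ring
  have h4 : 0 ≤ K * r₀ ^ 4 / b := by positivity
  linarith

end MassBounds

/-- The majorant of `m(s)/s² + 4πs|p(s)|` for `s > 0`, up to the factor `π K`. Real exponents are
used on the tail to match the library integrals of powers over `(r₀, ∞)`. -/
noncomputable def majorant (r₀ s : ℝ) : ℝ :=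
  if s ≤ r₀ then 16 / 3 * s else 16 / 3 * r₀ ^ 3 * s ^ (-2 : ℝ) + 4 * r₀ ^ 4 * s ^ (-3 : ℝ)

lemma majorant_integral {r₀ : ℝ} (hr₀ : 0 < r₀) :
    IntegrableOn (majorant r₀) (Set.Ioi 0) ∧
      ∫ s in Set.Ioi (0:ℝ), majorant r₀ s = 10 * r₀ ^ 2 := by
  have e1 : Set.EqOn (fun s : ℝ => 16 / 3 * s) (majorant r₀) (Set.Ioc 0 r₀) := fun s hs => by
    simp [majorant, hs.2]
  have e2 : Set.EqOn (fun s : ℝ => 16 / 3 * r₀ ^ 3 * s ^ (-2 : ℝ) + 4 * r₀ ^ 4 * s ^ (-3 : ℝ))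
      (majorant r₀) (Set.Ioi r₀) := fun s hs => by
    simp [majorant, not_le.2 (Set.mem_Ioi.1 hs)]
  have i1 : IntegrableOn (fun s : ℝ => 16 / 3 * s) (Set.Ioc 0 r₀) :=
    (intervalIntegrable_iff_integrableOn_Ioc_of_le hr₀.le).1
      (Continuous.intervalIntegrable (by fun_prop) _ _)
  have i2 : IntegrableOn (fun s : ℝ => 16 / 3 * r₀ ^ 3 * s ^ (-2 : ℝ)) (Set.Ioi r₀) :=
    (integrableOn_Ioi_rpow_of_lt (by norm_num) hr₀).const_mul _
  have i3 : IntegrableOn (fun s : ℝ => 4 * r₀ ^ 4 * s ^ (-3 : ℝ)) (Set.Ioi r₀) :=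
    (integrableOn_Ioi_rpow_of_lt (by norm_num) hr₀).const_mul _
  have j1 := i1.congr_fun e1 measurableSet_Ioc
  have j2 := IntegrableOn.congr_fun (Integrable.add i2 i3) e2 measurableSet_Ioi
  rw [← Set.Ioc_union_Ioi_eq_Ioi hr₀.le]
  refine ⟨j1.union j2, ?_⟩
  rw [setIntegral_union (Set.Ioc_disjoint_Ioi le_rfl) measurableSet_Ioi j1 j2,
    ← setIntegral_congr_fun measurableSet_Ioc e1, ← setIntegral_congr_fun measurableSet_Ioi e2,
    integral_add i2 i3, integral_const_mul, integral_const_mul, integral_const_mul,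
    integral_Ioi_rpow_of_lt (by norm_num) hr₀, integral_Ioi_rpow_of_lt (by norm_num) hr₀,
    ← intervalIntegral.integral_of_le hr₀.le, integral_id]
  have r1 : r₀ ^ (-2 + 1 : ℝ) = r₀⁻¹ := by
    rw [show (-2 + 1 : ℝ) = -1 by norm_num, Real.rpow_neg_one]
  have r2 : r₀ ^ (-3 + 1 : ℝ) = (r₀ ^ 2)⁻¹ := by
    rw [show (-3 + 1 : ℝ) = -(2 : ℕ) by norm_num, Real.rpow_neg hr₀.le, Real.rpow_natCast]
  rw [r1, r2]
  field_simp
  ring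



/-- Integral estimate behind the second part of Proposition 4.1: with `0 ≤ λ ≤ Λ`,
`|p| ≤ ρ` and `0 ≤ ρ(s) ≤ K min(1, r₀⁴/s⁴)`, the integral
`∫₀^∞ e^{2λ}(m/s² + 4πs|p|) ds` is bounded by `10π e^{2Λ} K r₀²`,
where `m(r) := 4π ∫₀ʳ s² ρ(s) ds`. -/
theorem stmt_6 (Λ K r₀ : ℝ) (hΛ : 0 < Λ) (hK : 0 < K) (hr₀ : 0 < r₀)
    (lam ρ p : ℝ → ℝ) (hlam_meas : Measurable lam) (hρ_meas : Measurable ρ)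
    (hp_meas : Measurable p)
    (hlam_bd : ∀ s : ℝ, 0 < s → 0 ≤ lam s ∧ lam s ≤ Λ)
    (hp_bd : ∀ s : ℝ, 0 < s → |p s| ≤ ρ s)
    (hρ_bd : ∀ s : ℝ, 0 < s → 0 ≤ ρ s ∧ ρ s ≤ K * min 1 (r₀ ^ 4 / s ^ 4))
    (m : ℝ → ℝ)
    (hm : ∀ r : ℝ, m r = 4 * Real.pi * ∫ s in (0:ℝ)..r, s ^ 2 * ρ s) :
    ∫ s in Set.Ioi (0:ℝ),
        Real.exp (2 * lam s) * (m s / s ^ 2 + 4 * Real.pi * s * |p s|)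
      ≤ 10 * Real.pi * Real.exp (2 * Λ) * K * r₀ ^ 2 := by
  obtain ⟨hint, hval⟩ := majorant_integral hr₀
  have hπ := Real.pi_pos
  have hm0 : ∀ s : ℝ, 0 < s → 0 ≤ m s := by
    intro s hs
    rw [hm]
    refine mul_nonneg (by positivity) ?_
    rw [intervalIntegral.integral_of_le hs.le]
    exact setIntegral_nonneg measurableSet_Ioc
      fun t ht => mul_nonneg (sq_nonneg t) (hρ_bd t ht.1).1
  have key : ∀ s : ℝ, 0 < s →
      m s / s ^ 2 + 4 * Real.pi * s * |p s| ≤ Real.pi * K * majorant r₀ s := by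
    intro s hs
    have hp : |p s| ≤ K * min 1 (r₀ ^ 4 / s ^ 4) := (hp_bd s hs).trans (hρ_bd s hs).2
    unfold majorant
    split_ifs with h
    · have h1 : |p s| ≤ K := hp.trans (mul_le_of_le_one_right hK.le (min_le_left _ _))
      have h2 : m s ≤ 4 * Real.pi * (K * s ^ 3 / 3) := by
        rw [hm]
        gcongr
        exact integral_sq_mul_density_le_cube hK hρ_meas hρ_bd hs.le
      calc m s / s ^ 2 + 4 * Real.pi * s * |p s|
          ≤ 4 * Real.pi * (K * s ^ 3 / 3) / s ^ 2 + 4 * Real.pi * s * K := by gcongr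
        _ = Real.pi * K * (16 / 3 * s) := by field_simp; ring
    · have h1 : |p s| ≤ K * (r₀ ^ 4 / s ^ 4) :=
        hp.trans (by gcongr; exact min_le_right _ _)
      have h2 : m s ≤ 4 * Real.pi * (4 / 3 * K * r₀ ^ 3) := by
        rw [hm]
        gcongr
        exact integral_sq_mul_density_le_const hK hr₀ hρ_meas hρ_bd (not_le.1 h).le
      have r1 : s ^ (-2 : ℝ) = (s ^ 2)⁻¹ := by
        rw [show (-2 : ℝ) = -(2 : ℕ) by norm_num, Real.rpow_neg hs.le, Real.rpow_natCast]
      have r2 : s ^ (-3 : ℝ) = (s ^ 3)⁻¹ := by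
        rw [show (-3 : ℝ) = -(3 : ℕ) by norm_num, Real.rpow_neg hs.le, Real.rpow_natCast]
      rw [r1, r2]
      calc m s / s ^ 2 + 4 * Real.pi * s * |p s|
          ≤ 4 * Real.pi * (4 / 3 * K * r₀ ^ 3) / s ^ 2
              + 4 * Real.pi * s * (K * (r₀ ^ 4 / s ^ 4)) := by gcongr
        _ = Real.pi * K * (16 / 3 * r₀ ^ 3 * (s ^ 2)⁻¹ + 4 * r₀ ^ 4 * (s ^ 3)⁻¹) := by
          field_simp; ring
  have hnn : ∀ s : ℝ, 0 < s → 0 ≤ m s / s ^ 2 + 4 * Real.pi * s * |p s| := by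
    intro s hs
    have := hm0 s hs
    positivity
  calc ∫ s in Set.Ioi (0:ℝ),
        Real.exp (2 * lam s) * (m s / s ^ 2 + 4 * Real.pi * s * |p s|)
      ≤ ∫ s in Set.Ioi (0:ℝ), Real.exp (2 * Λ) * (Real.pi * K) * majorant r₀ s := by
        -- only the majorant has to be integrable: a nonintegrable left side would be `0`
        refine integral_mono_of_nonneg ?_ (hint.const_mul _) ?_
        · filter_upwards [ae_restrict_mem measurableSet_Ioi] with s hs
          exact mul_nonneg (Real.exp_pos _).le (hnn s hs)
        · filter_upwards [ae_restrict_mem measurableSet_Ioi] with s hs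
          rw [mul_assoc (Real.exp (2 * Λ))]
          refine mul_le_mul (Real.exp_le_exp.2 ?_) (key s hs) (hnn s hs) (Real.exp_pos _).le
          linarith [(hlam_bd s hs).2]
    _ = 10 * Real.pi * Real.exp (2 * Λ) * K * r₀ ^ 2 := by
        rw [integral_const_mul, hval]
        ring
end

section
/- Let r₀, u₀, K > 0, and let f₀ : ℝ³ × ℝ³ → ℝ be measurable with 0 ≤ f₀ ≤ K and f₀(x,v) = 0 unless |x| ≤ r₀ and |v| ≤ u₀. For t > 0 and x ∈ ℝ³ define ρ(t,x) := ∫_{ℝ³} sqrt(1 + |v|²)·f₀( x − t·v/sqrt(1 + |v|²), v ) dv. Then ρ(t,x) ≤ (4π/3)·(1 + u₀²)³·K·r₀³·t^{−3} for all t > 0 and x ∈ ℝ³. -/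
/-!
The velocity map `w(v) = v / √(1 + |v|²)` is injective on `ℝ³`, with Jacobian determinant
`(1 + |v|²)^(-5/2)`: its derivative is a multiple of the identity plus a rank-one map. If `v`
contributes to `ρ(t, x)`, then `|v| ≤ u₀` and `|x - t w(v)| ≤ r₀`, so `w(v)` lies in the closed ball
of centre `x / t` and radius `r₀ / t`. On this set of `v` the integrand is at most
`K √(1 + |v|²) = K (1 + |v|²)³ |det w'(v)| ≤ K (1 + u₀²)³ |det w'(v)|`, and by the change of
variables formula the integral of `|det w'|` over it is the volume of its image under `w`, at most
the volume `(4π/3) (r₀ / t)³` of that ball.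
-/

open MeasureTheory

/-- The relativistic velocity `v / √(1 + |v|²)` of a particle of unit mass and momentum `v`. -/
noncomputable def relVelocity (v : EuclideanSpace ℝ (Fin 3)) : EuclideanSpace ℝ (Fin 3) :=
  (Real.sqrt (1 + ‖v‖ ^ 2))⁻¹ • v

/-- The derivative `h ↦ γ⁻¹ (h - γ⁻² ⟨v, h⟩ v)` of `relVelocity` at `v`, where
`γ = √(1 + |v|²)`. -/
noncomputable def relVelocityDeriv (v : EuclideanSpace ℝ (Fin 3)) :
    EuclideanSpace ℝ (Fin 3) →L[ℝ] EuclideanSpace ℝ (Fin 3) :=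
  (Real.sqrt (1 + ‖v‖ ^ 2))⁻¹ • (ContinuousLinearMap.id ℝ (EuclideanSpace ℝ (Fin 3)) +
    (innerSL ℝ v).smulRight (-(1 + ‖v‖ ^ 2)⁻¹ • v))

lemma sqrt_one_add_norm_sq_pos (v : EuclideanSpace ℝ (Fin 3)) :
    0 < Real.sqrt (1 + ‖v‖ ^ 2) := Real.sqrt_pos.2 (by positivity)

lemma hasFDerivAt_relVelocity (v : EuclideanSpace ℝ (Fin 3)) :
    HasFDerivAt relVelocity (relVelocityDeriv v) v := by
  have hpos := sqrt_one_add_norm_sq_pos v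
  have hsq : Real.sqrt (1 + ‖v‖ ^ 2) ^ 2 = 1 + ‖v‖ ^ 2 := Real.sq_sqrt (by positivity)
  have h1 : HasFDerivAt (fun v : EuclideanSpace ℝ (Fin 3) => 1 + ‖v‖ ^ 2)
      (2 • innerSL ℝ v) v := (hasStrictFDerivAt_norm_sq v).hasFDerivAt.const_add 1
  have h2 := (hasDerivAt_inv hpos.ne').comp_hasFDerivAt v (h1.sqrt (by positivity))
  have h3 := h2.smul (hasFDerivAt_id v)
  refine h3.congr_fderiv ?_
  ext1 h
  simp only [relVelocityDeriv, add_apply, smul_apply, ContinuousLinearMap.smulRight_apply, smul_add, smul_smul,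
    ContinuousLinearMap.id_apply, Function.comp_apply, id_eq, innerSL_apply_apply, smul_eq_mul,
    nsmul_eq_mul]
  generalize Real.sqrt (1 + ‖v‖ ^ 2) = g at *
  rw [← hsq]
  congr 2
  field_simp
  simp

/-- The rank-one update formula gives `γ⁻³ (1 - |v|² / γ²) = γ⁻⁵`. -/
lemma det_relVelocityDeriv (v : EuclideanSpace ℝ (Fin 3)) :
    (relVelocityDeriv v).det = (Real.sqrt (1 + ‖v‖ ^ 2))⁻¹ ^ 5 := by
  have hpos := sqrt_one_add_norm_sq_pos v
  have hsq : Real.sqrt (1 + ‖v‖ ^ 2) ^ 2 = 1 + ‖v‖ ^ 2 := Real.sq_sqrt (by positivity)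
  have key : ((relVelocityDeriv v : EuclideanSpace ℝ (Fin 3) →L[ℝ] EuclideanSpace ℝ (Fin 3)) :
      EuclideanSpace ℝ (Fin 3) →ₗ[ℝ] EuclideanSpace ℝ (Fin 3)) =
      (Real.sqrt (1 + ‖v‖ ^ 2))⁻¹ • LinearMap.transvection
        (innerSL ℝ v : EuclideanSpace ℝ (Fin 3) →ₗ[ℝ] ℝ) (-(1 + ‖v‖ ^ 2)⁻¹ • v) := by
    ext1 h
    simp [relVelocityDeriv, LinearMap.transvection.apply]
  rw [ContinuousLinearMap.det, key, LinearMap.det_smul, LinearMap.transvection.det]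
  have hin : inner ℝ v v = ‖v‖ ^ 2 := real_inner_self_eq_norm_sq v
  have hin2 : ‖v‖ ^ 2 = Real.sqrt (1 + ‖v‖ ^ 2) ^ 2 - 1 := by rw [hsq]; ring
  simp only [finrank_euclideanSpace, Fintype.card_fin, ContinuousLinearMap.coe_coe,
    innerSL_apply_apply, inner_smul_right, hin]
  generalize Real.sqrt (1 + ‖v‖ ^ 2) = g at *
  rw [← hsq, hin2]
  field_simp
  ring

/-- The velocity determines `γ = √(1 + |v|²)`, since `|relVelocity v|² = 1 - γ⁻²`, and hence
`v = γ • relVelocity v`. -/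
lemma relVelocity_injective : Function.Injective relVelocity := by
  have hn : ∀ v, ‖relVelocity v‖ ^ 2 = 1 - (1 + ‖v‖ ^ 2)⁻¹ := by
    intro v
    have hsq : Real.sqrt (1 + ‖v‖ ^ 2) ^ 2 = 1 + ‖v‖ ^ 2 := Real.sq_sqrt (by positivity)
    have : (1 + ‖v‖ ^ 2) ≠ 0 := by positivity
    rw [relVelocity, norm_smul, mul_pow, norm_inv, inv_pow, Real.norm_eq_abs, sq_abs, hsq]
    field_simp
    ring
  intro a b hab
  have h : (1 + ‖a‖ ^ 2) = (1 + ‖b‖ ^ 2) := by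
    have := hn a
    rw [hab, hn b] at this
    exact inv_injective (by linarith)
  simp only [relVelocity, h] at hab
  exact smul_right_injective _ (inv_pos.2 (sqrt_one_add_norm_sq_pos b)).ne' hab

/-- The momenta that can reach `x` at time `t` from the support `|x| ≤ r`, `|v| ≤ u`. -/
def reachingMomenta (r u t : ℝ) (x : EuclideanSpace ℝ (Fin 3)) : Set (EuclideanSpace ℝ (Fin 3)) :=
  {v | ‖v‖ ≤ u ∧ ‖x - (t / Real.sqrt (1 + ‖v‖ ^ 2)) • v‖ ≤ r}

lemma continuous_freeTransport (t : ℝ) (x : EuclideanSpace ℝ (Fin 3)) :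
    Continuous fun v : EuclideanSpace ℝ (Fin 3) => x - (t / Real.sqrt (1 + ‖v‖ ^ 2)) • v := by
  have h : Continuous fun v : EuclideanSpace ℝ (Fin 3) => Real.sqrt (1 + ‖v‖ ^ 2) := by fun_prop
  exact continuous_const.sub
    ((continuous_const.div h fun v => (sqrt_one_add_norm_sq_pos v).ne').smul continuous_id)

lemma measurableSet_reachingMomenta (r u t : ℝ) (x : EuclideanSpace ℝ (Fin 3)) :
    MeasurableSet (reachingMomenta r u t x) :=
  ((isClosed_le continuous_norm continuous_const).inter
    (isClosed_le (continuous_freeTransport t x).norm continuous_const)).measurableSet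

lemma relVelocity_image_subset (r u t : ℝ) (ht : 0 < t) (x : EuclideanSpace ℝ (Fin 3)) :
    relVelocity '' reachingMomenta r u t x ⊆ Metric.closedBall (t⁻¹ • x) (r / t) := by
  rintro _ ⟨v, ⟨-, hv⟩, rfl⟩
  rw [mem_closedBall_iff_norm', le_div_iff₀ ht]
  calc ‖t⁻¹ • x - relVelocity v‖ * t = ‖t • (t⁻¹ • x - relVelocity v)‖ := by
        rw [norm_smul, Real.norm_of_nonneg ht.le, mul_comm]
    _ = ‖x - (t / Real.sqrt (1 + ‖v‖ ^ 2)) • v‖ := by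
        rw [smul_sub, smul_smul, mul_inv_cancel₀ ht.ne', one_smul, relVelocity, smul_smul,
          div_eq_mul_inv]
    _ ≤ r := hv

/-- Free-streaming decay (Remark 4.1 / Lemma 4.2): in Minkowski spacetime, the energy
density obtained by transporting an initial distribution `f₀`, bounded by `K` and
supported in `|x| ≤ r₀`, `|v| ≤ u₀`, along the free relativistic characteristics
decays like `t^{−3}`. -/
theorem stmt_7 (r₀ u₀ K : ℝ) (hr₀ : 0 < r₀) (hu₀ : 0 < u₀) (hK : 0 < K)
    (f₀ : EuclideanSpace ℝ (Fin 3) × EuclideanSpace ℝ (Fin 3) → ℝ)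
    (hf₀_meas : Measurable f₀)
    (hf₀_nonneg : ∀ z, 0 ≤ f₀ z) (hf₀_bd : ∀ z, f₀ z ≤ K)
    (hf₀_supp : ∀ x v : EuclideanSpace ℝ (Fin 3),
      (r₀ < ‖x‖ ∨ u₀ < ‖v‖) → f₀ (x, v) = 0)
    (ρ : ℝ → EuclideanSpace ℝ (Fin 3) → ℝ)
    (hρ : ∀ (t : ℝ) (x : EuclideanSpace ℝ (Fin 3)), ρ t x =
      ∫ v : EuclideanSpace ℝ (Fin 3),
        Real.sqrt (1 + ‖v‖ ^ 2) * f₀ (x - (t / Real.sqrt (1 + ‖v‖ ^ 2)) • v, v)) :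
    ∀ (t : ℝ), 0 < t → ∀ x : EuclideanSpace ℝ (Fin 3),
      ρ t x ≤ (4 * Real.pi / 3) * (1 + u₀ ^ 2) ^ 3 * K * r₀ ^ 3 / t ^ 3 := by
  intro t ht x
  have hS := measurableSet_reachingMomenta r₀ u₀ t x
  have hmeas : Measurable fun v : EuclideanSpace ℝ (Fin 3) =>
      Real.sqrt (1 + ‖v‖ ^ 2) * f₀ (x - (t / Real.sqrt (1 + ‖v‖ ^ 2)) • v, v) :=
    Measurable.mul (by fun_prop)
      (hf₀_meas.comp ((continuous_freeTransport t x).measurable.prodMk measurable_id))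
  have hpt : ∀ v : EuclideanSpace ℝ (Fin 3),
      ENNReal.ofReal (Real.sqrt (1 + ‖v‖ ^ 2) * f₀ (x - (t / Real.sqrt (1 + ‖v‖ ^ 2)) • v, v)) ≤
      (reachingMomenta r₀ u₀ t x).indicator (fun v => ENNReal.ofReal (K * (1 + u₀ ^ 2) ^ 3) *
        ENNReal.ofReal |(relVelocityDeriv v).det|) v := by
    intro v
    by_cases hv : v ∈ reachingMomenta r₀ u₀ t x
    · rw [Set.indicator_of_mem hv, ← ENNReal.ofReal_mul (by positivity), det_relVelocityDeriv]
      apply ENNReal.ofReal_le_ofReal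
      have hpos := sqrt_one_add_norm_sq_pos v
      have hsq : Real.sqrt (1 + ‖v‖ ^ 2) ^ 2 = 1 + ‖v‖ ^ 2 := Real.sq_sqrt (by positivity)
      rw [abs_of_pos (by positivity)]
      calc _ ≤ Real.sqrt (1 + ‖v‖ ^ 2) * K := by gcongr; exact hf₀_bd _
        _ = K * (Real.sqrt (1 + ‖v‖ ^ 2) ^ 2) ^ 3 * (Real.sqrt (1 + ‖v‖ ^ 2))⁻¹ ^ 5 := by
          field_simp
        _ ≤ _ := by
          rw [hsq]
          gcongr
          exact hv.1
    · rw [Set.indicator_of_notMem hv, hf₀_supp, mul_zero, ENNReal.ofReal_zero]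
      by_contra! h
      exact hv ⟨h.2, h.1⟩
  rw [hρ, integral_eq_lintegral_of_nonneg_ae
    (Filter.Eventually.of_forall fun v => mul_nonneg (Real.sqrt_nonneg _) (hf₀_nonneg _))
    hmeas.aestronglyMeasurable]
  refine ENNReal.toReal_le_of_le_ofReal (by positivity) ?_
  calc _ ≤ ∫⁻ v, (reachingMomenta r₀ u₀ t x).indicator
          (fun v => ENNReal.ofReal (K * (1 + u₀ ^ 2) ^ 3) *
            ENNReal.ofReal |(relVelocityDeriv v).det|) v := lintegral_mono hpt
    _ = ENNReal.ofReal (K * (1 + u₀ ^ 2) ^ 3) *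
          volume (relVelocity '' reachingMomenta r₀ u₀ t x) := by
        rw [lintegral_indicator hS, lintegral_const_mul' _ _ ENNReal.ofReal_ne_top,
          lintegral_abs_det_fderiv_eq_addHaar_image volume hS
            (fun v _ => (hasFDerivAt_relVelocity v).hasFDerivWithinAt)
            relVelocity_injective.injOn]
    _ ≤ ENNReal.ofReal (K * (1 + u₀ ^ 2) ^ 3) *
          volume (Metric.closedBall (t⁻¹ • x) (r₀ / t)) := by
        gcongr
        exact relVelocity_image_subset r₀ u₀ t ht x
    _ = _ := by
        rw [EuclideanSpace.volume_closedBall_fin_three, ← ENNReal.ofReal_pow (by positivity),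
          ← ENNReal.ofReal_mul (by positivity), ← ENNReal.ofReal_mul (by positivity)]
        congr 1
        field_simp
end
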